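/- Let U, V, T be finite subsets of ℤ and let 𝒮 = (U×{0}) ∪ (V×T) ⊆ ℤ², where the two parts are disjoint, i.e. (U×{0}) ∩ (V×T) = ∅ (a Hadamard model, whose step polynomial factors as S(x,y) = U(x) + V(x)·T(y)). For i, k, n ∈ ℕ let c₁(i,k;n) be the number of sequences ((w₁,ε₁),…,(w_n,ε_n)) with ε_l ∈ {0,1}, w_l ∈ U whenever ε_l = 0 and w_l ∈ V whenever ε_l = 1, exactly k indices l having ε_l = 1, all partial sums w₁+⋯+w_l nonnegative, and total sum w₁+⋯+w_n = i (these are walks on ℕ with steps taken in the disjoint union U ⊔ V, k of them from V, ending at i). For j, k ∈ ℕ let c₂(j;k) be the number of sequences (t₁,…,t_k) ∈ T^k with all partial sums nonnegative and total sum j (walks on ℕ with steps in T ending at j). Then for all i, j, n ∈ ℕ: q(i,j;n) = Σ_{k=0}^n c₁(i,k;n)·c₂(j;k). (This is the coefficient form of the Hadamard-product identity Q(x,y;t) = C₁(x,v;t) ⊙_v C₂(y;v) evaluated at v = 1.) -/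

import Mathlib

/-!
Cut each walk at its last step. With the target allowed to range over all of `ℤ` (counts vanish at
negative targets), each of the three counts then satisfies, at nonnegative targets, a linear recursion
in its number of steps (`walkCount_succ`):

* `q(i,j;n+1) = ∑_{u ∈ U} q(i-u,j;n) + ∑_{v ∈ V} ∑_{t ∈ T} q(i-v,j-t;n)`, by disjointness,
* `c₁(i,k;n+1) = ∑_{u ∈ U} c₁(i-u,k;n) + ∑_{v ∈ V} c₁(i-v,k-1;n)`,
* `c₂(j;k+1) = ∑_{t ∈ T} c₂(j-t;k)`.

Together they yield the product formula by induction on `n` (`hadamard_int`). All three counts are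
instances of a single one, `walkCount`; for `c₁` the number of steps in `V` is recorded as an
unconstrained second coordinate of the walk.
-/

open Finset

/-- Partial sum of the first `m` steps of `f`. -/
def partialSum {n : ℕ} (f : Fin n → ℤ × ℤ) (m : ℕ) : ℤ × ℤ :=
  ∑ k ∈ Finset.univ.filter (fun k : Fin n => (k : ℕ) < m), f k

/-- Number of `n`-step quadrant walks from `(0,0)` to `(i,j)` with steps in `S`. -/
noncomputable def quadWalks (S : Finset (ℤ × ℤ)) (i j : ℕ) (n : ℕ) : ℕ :=
  Nat.card {f : Fin n → ℤ × ℤ //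
    (∀ k, f k ∈ S) ∧
    (∀ m : ℕ, m ≤ n → 0 ≤ (partialSum f m).1 ∧ 0 ≤ (partialSum f m).2) ∧
    partialSum f n = ((i : ℤ), (j : ℤ))}

/-- 1D partial sum of the first `m` steps of `f`. -/
def partialSum1 {n : ℕ} (f : Fin n → ℤ) (m : ℕ) : ℤ :=
  ∑ k ∈ Finset.univ.filter (fun k : Fin n => (k : ℕ) < m), f k

/-- `c₁(i,k;n)`: the number of `n`-step walks on `ℕ` from `0` to `i` with steps tagged
by `false` (taken in `U`) or `true` (taken in `V`), exactly `k` of them tagged `true`. -/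
noncomputable def hadC1 (U V : Finset ℤ) (i k n : ℕ) : ℕ :=
  Nat.card {f : Fin n → ℤ × Bool //
    (∀ l, ((f l).2 = false → (f l).1 ∈ U) ∧ ((f l).2 = true → (f l).1 ∈ V)) ∧
    (Finset.univ.filter (fun l : Fin n => (f l).2 = true)).card = k ∧
    (∀ m : ℕ, m ≤ n → 0 ≤ partialSum1 (fun l => (f l).1) m) ∧
    partialSum1 (fun l => (f l).1) n = (i : ℤ)}

/-- `c₂(j;k)`: the number of `k`-step walks on `ℕ` from `0` to `j` with steps in `T`. -/
noncomputable def hadC2 (T : Finset ℤ) (j k : ℕ) : ℕ :=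
  Nat.card {g : Fin k → ℤ //
    (∀ l, g l ∈ T) ∧
    (∀ m : ℕ, m ≤ k → 0 ≤ partialSum1 g m) ∧
    partialSum1 g k = (j : ℤ)}

/-- Position after the first `m` steps of `f`, where a step `a` displaces by `φ a`. -/
def position {α M : Type*} [AddCommGroup M] (φ : α → M) {n : ℕ} (f : Fin n → α) (m : ℕ) : M :=
  ∑ k ∈ Finset.univ.filter (fun k : Fin n => (k : ℕ) < m), φ (f k)

/-- `f` is a walk with steps in `S` from `0` to `p`, all of whose positions satisfy `P`. -/
def IsWalk {α M : Type*} [AddCommGroup M] (S : Finset α) (φ : α → M) (P : M → Prop) {n : ℕ}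
    (p : M) (f : Fin n → α) : Prop :=
  (∀ l, f l ∈ S) ∧ (∀ m : ℕ, m ≤ n → P (position φ f m)) ∧ position φ f n = p

/-- The number of `n`-step walks with steps in `S` from `0` to `p`, all of whose positions
satisfy `P`. -/
noncomputable def walkCount {α M : Type*} [AddCommGroup M] (S : Finset α) (φ : α → M)
    (P : M → Prop) (n : ℕ) (p : M) : ℕ :=
  Nat.card {f : Fin n → α // IsWalk S φ P p f}

section walks

variable {α M : Type*} [AddCommGroup M] (S : Finset α) (φ : α → M) (P : M → Prop)

lemma position_snoc_of_le {n : ℕ} (f : Fin n → α) (a : α) {m : ℕ} (hm : m ≤ n) :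
    position φ (Fin.snoc f a : Fin (n + 1) → α) m = position φ f m := by
  unfold position
  rw [Finset.sum_filter, Finset.sum_filter, Fin.sum_univ_castSucc]
  simp [hm]

lemma position_snoc_last {n : ℕ} (f : Fin n → α) (a : α) :
    position φ (Fin.snoc f a : Fin (n + 1) → α) (n + 1) = position φ f n + φ a := by
  unfold position
  rw [Finset.sum_filter, Finset.sum_filter, Fin.sum_univ_castSucc]
  simp only [Fin.snoc_castSucc, Fin.snoc_last, Fin.val_castSucc, Fin.val_last, Fin.is_lt]
  congr 1
  · refine Finset.sum_congr rfl fun k _ => ?_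
    rw [if_pos (by omega), if_pos trivial]
  · simp

lemma isWalk_snoc {n : ℕ} (p : M) (hp : P p) (f : Fin n → α) (a : α) :
    IsWalk S φ P p (Fin.snoc f a : Fin (n + 1) → α) ↔ a ∈ S ∧ IsWalk S φ P (p - φ a) f := by
  unfold IsWalk
  rw [position_snoc_last, Fin.forall_fin_succ', eq_sub_iff_add_eq]
  simp only [Fin.snoc_castSucc, Fin.snoc_last]
  constructor
  · rintro ⟨⟨h1, h2⟩, h3, h4⟩
    refine ⟨h2, h1, fun m hm => ?_, h4⟩
    rw [← position_snoc_of_le φ f a hm]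
    exact h3 m (by omega)
  · rintro ⟨h2, h1, h3, h4⟩
    refine ⟨⟨h1, h2⟩, fun m hm => ?_, h4⟩
    rcases Nat.lt_or_ge n m with h | h
    · obtain rfl : m = n + 1 := by omega
      rw [position_snoc_last, h4]
      exact hp
    · rw [position_snoc_of_le φ f a h]
      exact h3 m h

instance finite_walks (n : ℕ) (p : M) : Finite {f : Fin n → α // IsWalk S φ P p f} := by
  refine Finite.of_injective
    (fun f => (fun l => ⟨f.1 l, f.2.1 l⟩ : Fin n → {a // a ∈ S})) fun f g h => ?_
  ext l
  exact congrArg Subtype.val (congrFun h l)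

/-- The last-step recursion. -/
lemma walkCount_succ (n : ℕ) (p : M) (hp : P p) :
    walkCount S φ P (n + 1) p = ∑ a ∈ S, walkCount S φ P n (p - φ a) := by
  unfold walkCount
  rw [← Finset.sum_coe_sort S, ← Nat.card_sigma]
  refine Nat.card_congr
    { toFun := fun f => ?_
      invFun := fun x => ⟨Fin.snoc x.2.1 x.1.1,
        (isWalk_snoc S φ P p hp _ _).2 ⟨x.1.2, x.2.2⟩⟩
      left_inv := ?_
      right_inv := ?_ }
  · have h := (isWalk_snoc S φ P p hp (Fin.init f.1) (f.1 (Fin.last n))).1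
      (by rw [Fin.snoc_init_self]; exact f.2)
    exact ⟨⟨f.1 (Fin.last n), h.1⟩, ⟨Fin.init f.1, h.2⟩⟩
  · rintro ⟨f, hf⟩
    simp
  · rintro ⟨⟨a, ha⟩, f, hf⟩
    refine Sigma.ext (by simp) ?_
    rw [Subtype.heq_iff_coe_eq] <;> simp

lemma walkCount_eq_zero (n : ℕ) (p : M) (hp : ¬ P p) : walkCount S φ P n p = 0 := by
  unfold walkCount
  have : IsEmpty {f : Fin n → α // IsWalk S φ P p f} :=
    ⟨fun f => hp (f.2.2.2 ▸ f.2.2.1 n le_rfl)⟩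
  exact Nat.card_of_isEmpty

lemma walkCount_zero [DecidableEq M] (h0 : P 0) (p : M) :
    walkCount S φ P 0 p = if p = 0 then 1 else 0 := by
  unfold walkCount
  split_ifs with h
  · subst h
    rw [Nat.card_eq_one_iff_unique]
    exact ⟨inferInstance, ⟨⟨Fin.elim0, fun l => l.elim0, fun m _ => by simpa [position] using h0,
      by simp [position]⟩⟩⟩
  · have : IsEmpty {f : Fin 0 → α // IsWalk S φ P p f} :=
      ⟨fun f => h (by simpa [position] using f.2.2.2.symm)⟩
    exact Nat.card_of_isEmpty

end walks

/-- Quadrant walks, with an arbitrary integer target. -/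
noncomputable def quadCount (S : Finset (ℤ × ℤ)) (n : ℕ) (p : ℤ × ℤ) : ℕ :=
  walkCount S id (fun p => 0 ≤ p.1 ∧ 0 ≤ p.2) n p

/-- Tagged half-line walks, with the number of `true` tags as second coordinate of the target. -/
noncomputable def tagCount (U V : Finset ℤ) (n : ℕ) (p : ℤ × ℤ) : ℕ :=
  walkCount (U ×ˢ {false} ∪ V ×ˢ {true}) (fun a => (a.1, if a.2 = true then (1 : ℤ) else 0))
    (fun p => 0 ≤ p.1) n p

/-- Half-line walks, with an arbitrary integer target. -/
noncomputable def lineCount (T : Finset ℤ) (k : ℕ) (j : ℤ) : ℕ :=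
  walkCount T id (fun j => 0 ≤ j) k j

lemma quadWalks_eq (S : Finset (ℤ × ℤ)) (i j n : ℕ) :
    quadWalks S i j n = quadCount S n (i, j) := rfl

lemma hadC2_eq (T : Finset ℤ) (j k : ℕ) : hadC2 T j k = lineCount T k j := rfl

lemma hadC1_eq (U V : Finset ℤ) (i k n : ℕ) : hadC1 U V i k n = tagCount U V n (i, k) := by
  unfold hadC1 tagCount walkCount IsWalk
  refine Nat.card_congr (Equiv.subtypeEquivRight fun f => ?_)
  have hpos : ∀ m, position (fun a : ℤ × Bool => (a.1, if a.2 = true then (1 : ℤ) else 0)) f m =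
      (partialSum1 (fun l => (f l).1) m,
        ∑ l ∈ Finset.univ.filter (fun l : Fin n => (l : ℕ) < m),
          if (f l).2 = true then (1 : ℤ) else 0) := fun m => by
    unfold position partialSum1
    ext
    · rw [Prod.fst_sum]
    · rw [Prod.snd_sum]
  have hmem : ∀ a : ℤ × Bool, a ∈ U ×ˢ {false} ∪ V ×ˢ {true} ↔
      (a.2 = false → a.1 ∈ U) ∧ (a.2 = true → a.1 ∈ V) := by
    rintro ⟨w, _ | _⟩ <;> simp
  have hcard : (∑ l ∈ Finset.univ.filter (fun l : Fin n => (l : ℕ) < n),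
      if (f l).2 = true then (1 : ℤ) else 0) = (k : ℤ) ↔
      (Finset.univ.filter (fun l : Fin n => (f l).2 = true)).card = k := by
    rw [Finset.filter_true_of_mem (fun l _ => l.2), Finset.sum_boole]
    exact Nat.cast_inj
  simp only [hpos, hmem, Prod.mk.injEq, hcard]
  tauto

lemma tagCount_succ (U V : Finset ℤ) (n : ℕ) (i k : ℤ) (hi : 0 ≤ i) :
    tagCount U V (n + 1) (i, k) =
      ∑ u ∈ U, tagCount U V n (i - u, k) + ∑ v ∈ V, tagCount U V n (i - v, k - 1) := by
  unfold tagCount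
  rw [walkCount_succ _ _ (fun p : ℤ × ℤ => 0 ≤ p.1) _ _ hi, Finset.sum_union, Finset.sum_product, Finset.sum_product]
  · simp
  · rw [Finset.disjoint_left]
    rintro ⟨w, _ | _⟩ <;> simp

lemma quadCount_succ (U V T : Finset ℤ)
    (hdisj : (U ×ˢ ({0} : Finset ℤ)) ∩ (V ×ˢ T) = ∅) (n : ℕ) (i j : ℤ) (hi : 0 ≤ i)
    (hj : 0 ≤ j) :
    quadCount (U ×ˢ {0} ∪ V ×ˢ T) (n + 1) (i, j) =
      ∑ u ∈ U, quadCount (U ×ˢ {0} ∪ V ×ˢ T) n (i - u, j) +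
      ∑ v ∈ V, ∑ t ∈ T, quadCount (U ×ˢ {0} ∪ V ×ˢ T) n (i - v, j - t) := by
  unfold quadCount
  rw [walkCount_succ _ _ _ _ _ ⟨hi, hj⟩,
    Finset.sum_union (Finset.disjoint_iff_inter_eq_empty.2 hdisj), Finset.sum_product,
    Finset.sum_product]
  simp

/-- The number of `true` tags lies between `0` and the number of steps. -/
lemma tagCount_eq_zero (U V : Finset ℤ) (n : ℕ) (i k : ℤ) (hk : k < 0 ∨ n < k) :
    tagCount U V n (i, k) = 0 := by
  induction n generalizing i k with
  | zero =>
    unfold tagCount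
    rw [walkCount_zero _ _ _ (by simp), if_neg]
    rw [Prod.mk_eq_zero]
    rintro ⟨-, rfl⟩
    simp at hk
  | succ n ih =>
    by_cases hi : 0 ≤ i
    · rw [tagCount_succ U V n i k hi]
      exact Nat.add_eq_zero_iff.2
        ⟨Finset.sum_eq_zero fun u _ => ih _ _ (by push_cast at hk; omega),
          Finset.sum_eq_zero fun v _ => ih _ _ (by push_cast at hk; omega)⟩
    · exact walkCount_eq_zero _ _ _ _ _ hi

/-- The Hadamard decomposition with arbitrary integer targets. -/
lemma hadamard_int (U V T : Finset ℤ)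
    (hdisj : (U ×ˢ ({0} : Finset ℤ)) ∩ (V ×ˢ T) = ∅) (n : ℕ) (i j : ℤ) :
    quadCount (U ×ˢ {0} ∪ V ×ˢ T) n (i, j) =
      ∑ k ∈ Finset.range (n + 1), tagCount U V n (i, k) * lineCount T k j := by
  induction n generalizing i j with
  | zero =>
    unfold quadCount tagCount lineCount
    simp only [zero_add, Finset.sum_range_one]
    rw [walkCount_zero _ _ _ (by simp), walkCount_zero _ _ _ (by simp),
      walkCount_zero _ _ _ (by simp)]
    by_cases hi : i = 0 <;> by_cases hj : j = 0 <;> simp [hi, hj]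
  | succ n ih =>
    by_cases hj : 0 ≤ j
    swap
    · rw [Finset.sum_eq_zero]
      · exact walkCount_eq_zero _ _ _ _ _ fun h => hj h.2
      · intro k _
        rw [show lineCount T k j = 0 from walkCount_eq_zero _ _ _ _ _ hj, mul_zero]
    by_cases hi : 0 ≤ i
    swap
    · rw [Finset.sum_eq_zero]
      · exact walkCount_eq_zero _ _ _ _ _ fun h => hi h.1
      · intro k _
        rw [show tagCount U V (n + 1) (i, k) = 0 from walkCount_eq_zero _ _ _ _ _ hi, zero_mul]
    rw [quadCount_succ U V T hdisj n i j hi hj]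
    simp only [ih, tagCount_succ U V n i _ hi, add_mul, Finset.sum_add_distrib]
    congr 1
    -- The term `k = n + 1` vanishes: only `n` steps carry a tag.
    · rw [Finset.sum_range_succ _ (n + 1), Finset.sum_comm]
      have h0 : ∑ u ∈ U, tagCount U V n (i - u, ((n + 1 : ℕ) : ℤ)) = 0 :=
        Finset.sum_eq_zero fun u _ => tagCount_eq_zero U V n _ _ (by push_cast; omega)
      simp only [h0, zero_mul, add_zero, Finset.sum_mul]
    -- The term `k = 0` vanishes, and the others are shifted by one.
    · rw [Finset.sum_range_succ' _ (n + 1)]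
      have h0 : ∑ v ∈ V, tagCount U V n (i - v, ((0 : ℕ) : ℤ) - 1) = 0 :=
        Finset.sum_eq_zero fun v _ => tagCount_eq_zero U V n _ _ (by simp)
      have h2 : ∀ k, lineCount T (k + 1) j = ∑ t ∈ T, lineCount T k (j - t) := fun k =>
        walkCount_succ _ _ _ _ _ hj
      simp only [h0, h2, zero_mul, add_zero, Nat.cast_add, Nat.cast_one, add_sub_cancel_right]
      simp_rw [Finset.sum_mul]
      rw [Finset.sum_comm (s := Finset.range (n + 1))]
      refine Finset.sum_congr rfl fun v _ => ?_
      rw [Finset.sum_comm]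
      simp_rw [Finset.mul_sum]

/-- Hadamard decomposition: for a Hadamard model `𝒮 = (U×{0}) ∪ (V×T)` (disjoint union),
`q(i,j;n) = Σ_k c₁(i,k;n)·c₂(j;k)`. -/
theorem stmt15 (U V T : Finset ℤ)
    (hdisj : (U ×ˢ ({0} : Finset ℤ)) ∩ (V ×ˢ T) = ∅)
    (i j n : ℕ) :
    quadWalks ((U ×ˢ ({0} : Finset ℤ)) ∪ (V ×ˢ T)) i j n =
      ∑ k ∈ Finset.range (n + 1), hadC1 U V i k n * hadC2 T j k := by
  rw [quadWalks_eq, hadamard_int U V T hdisj]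
  simp only [hadC1_eq, hadC2_eq]
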